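/- Let H be a separable infinite-dimensional complex Hilbert space and let U(H) be its unitary group with the strong operator topology. Let G ⊆ U(H) be a subset with the Baire property. Then G is comeager in U(H) if and only if for comeagerly many u ∈ U(H), the set G ∩ cl(⟨u⟩) is comeager in cl(⟨u⟩), where cl(⟨u⟩) denotes the closure in U(H) of the cyclic group generated by u, equipped with the subspace topology. -/

import Mathlib

open MeasureTheory Topology

/-- The unitary group `U(H)` of a complex Hilbert space `H`, to be equipped with the strong
operator topology. -/
def UnitarySOT (H : Type*) [NormedAddCommGroup H] [InnerProductSpace ℂ H]
    [CompleteSpace H] : Type _ :=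
  unitary (H →L[ℂ] H)

noncomputable instance {H : Type*} [NormedAddCommGroup H] [InnerProductSpace ℂ H]
    [CompleteSpace H] : Group (UnitarySOT H) :=
  inferInstanceAs (Group (unitary (H →L[ℂ] H)))

/-- The strong operator topology on `U(H)`: the topology of pointwise norm convergence,
i.e. the topology induced by the inclusion of `U(H)` into `H → H` with the product topology. -/
instance {H : Type*} [NormedAddCommGroup H] [InnerProductSpace ℂ H] [CompleteSpace H] :
    TopologicalSpace (UnitarySOT H) :=
  TopologicalSpace.induced
    (fun (u : unitary (H →L[ℂ] H)) (x : H) => (u : H →L[ℂ] H) x)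
    (inferInstance : TopologicalSpace (H → H))

/-!
A generic unitary `u` is recurrent: `1` is a cluster point of its positive powers, because the
unitaries that are diagonal on a finite-dimensional subspace and the identity on its complement
are recurrent and dense. The powers `u ^ n`, `n ≠ 0`, of a recurrent `u` are dense in `cl(⟨u⟩)`.

The power map `u ↦ u ^ n`, `n ≠ 0`, pulls dense open sets back to dense sets. Every open set
contains a diagonal unitary whose eigenvalues `lᵢ` have the property that `lᵢ ^ n = lⱼ ^ n` forces
`lᵢ = lⱼ`. For such eigenvalues, `n`-th roots of points of the circle can be chosen with Lipschitz
control at all the points `lᵢ ^ n` at once, so a diagonal unitary close to the `n`-th power of the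
given one has an `n`-th root close to the given one.
Hence for a comeager `G`, written as an intersection of dense open sets, generically
all powers `u ^ n`, `n ≠ 0`, lie in each of these sets, which makes `G` comeager in `cl(⟨u⟩)`.

Conversely, if `G` is not comeager, the Baire property gives a nonempty open `O` in which `G` is
meager. The first direction, applied to the complement of `O ∩ G`, shows that `O ∩ G` is meager in
`cl(⟨u⟩)` for generic `u ∈ O`, so `G` is not comeager in `cl(⟨u⟩)` by the Baire category theorem.
-/

open Filter Set
open scoped ComplexConjugate InnerProductSpace

section Category

variable {X : Type*} [TopologicalSpace X]

theorem tendsto_residual_of_dense_preimage {Y : Type*} [TopologicalSpace Y] {f : X → Y}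
    (hf : Continuous f) (hd : ∀ t, IsOpen t → Dense t → Dense (f ⁻¹' t)) :
    Tendsto f (residual X) (residual Y) :=
  le_countableGenerate_iff_of_countableInterFilter.2 fun t ht ↦
    residual_of_dense_open (ht.1.preimage hf) (hd t ht.1 ht.2)

theorem mem_residual_iff_eventually_preimage_val_mem_residual [BaireSpace X] {K : X → Set X}
    [∀ u, BaireSpace (K u)] (hK : ∀ u, u ∈ K u)
    (hres : ∀ A ∈ residual X, ∀ᶠ u in residual X, (Subtype.val ⁻¹' A : Set (K u)) ∈ residual (K u))
    {G : Set X} (hG : BaireMeasurableSet G) :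
    G ∈ residual X ↔ ∀ᶠ u in residual X, (Subtype.val ⁻¹' G : Set (K u)) ∈ residual (K u) := by
  refine ⟨hres G, fun hfib ↦ ?_⟩
  obtain ⟨O, hO, hGO⟩ := hG.compl.residualEq_isOpen
  suffices hempty : O = ∅ by
    filter_upwards [hGO.mem_iff] with x hx
    simpa [hempty] using hx
  by_contra! hne
  have hOG : {x | x ∈ O → x ∉ G} ∈ residual X := hGO.mem_iff.mono fun _ hx ↦ hx.2
  obtain ⟨u, huO, huG, huOG⟩ := (dense_of_mem_residual (hfib.and (hres _ hOG))).inter_open_nonempty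
    O hO hne
  obtain ⟨y, hyO, hyG, hyOG⟩ := (dense_of_mem_residual (inter_mem huG huOG)).inter_open_nonempty
    (Subtype.val ⁻¹' O) (hO.preimage continuous_subtype_val) ⟨⟨u, hK u⟩, huO⟩
  exact hyOG hyO hyG

end Category

section Recurrence

variable {Γ : Type*} [TopologicalSpace Γ]

theorem isGδ_setOf_mapClusterPt_one_pow [Monoid Γ] [ContinuousMul Γ] [FirstCountableTopology Γ] :
    IsGδ {u : Γ | MapClusterPt 1 atTop (u ^ · : ℕ → Γ)} := by
  obtain ⟨B, hB, hbasis⟩ := (nhds_basis_opens (1 : Γ)).exists_antitone_subbasis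
  simp only [hbasis.1.mapClusterPt_iff_frequently, frequently_atTop, true_imp_iff, ofPred_forall]
  refine IsGδ.iInter fun i ↦ IsGδ.iInter_of_isOpen fun N ↦ ?_
  simp only [ofPred_exists, ofPred_and]
  exact isOpen_iUnion fun n ↦ isOpen_const.inter ((hB i).2.preimage (continuous_pow n))

variable [Group Γ] [IsTopologicalGroup Γ] {u : Γ}

theorem mapClusterPt_zpow_of_mapClusterPt_one (hu : MapClusterPt 1 atTop (u ^ · : ℕ → Γ))
    (m : ℤ) : MapClusterPt (u ^ m) atTop (u ^ · : ℕ → Γ) := by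
  rw [← mapClusterPt_atTop_zpow_iff_pow] at hu ⊢
  have hshift : MapClusterPt (u ^ m) atTop ((u ^ · : ℤ → Γ) ∘ (m + ·)) := by
    simpa [Function.comp_def, zpow_add] using
      hu.continuousAt_comp (continuous_const_mul (u ^ m)).continuousAt
  exact hshift.of_comp (tendsto_atTop_add_const_left atTop m tendsto_id)

theorem mapClusterPt_of_mem_closure_zpowers (hu : MapClusterPt 1 atTop (u ^ · : ℕ → Γ)) {y : Γ}
    (hy : y ∈ closure (Subgroup.zpowers u : Set Γ)) : MapClusterPt y atTop (u ^ · : ℕ → Γ) := by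
  refine closure_minimal ?_ isClosed_setOfPred_clusterPt hy
  rintro _ ⟨m, rfl⟩
  exact mapClusterPt_zpow_of_mapClusterPt_one hu m

theorem dense_preimage_val_closure_zpowers (hu : MapClusterPt 1 atTop (u ^ · : ℕ → Γ)) {t : Set Γ}
    (ht : ∀ n : ℕ, n ≠ 0 → u ^ n ∈ t) :
    Dense (Subtype.val ⁻¹' t : Set (closure (Subgroup.zpowers u : Set Γ))) := by
  rw [Subtype.dense_iff]
  intro y hy
  rw [mem_closure_iff_nhds]
  intro W hW
  obtain ⟨n, hnW, hn⟩ := ((mapClusterPt_of_mem_closure_zpowers hu hy).frequently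
    hW).and_eventually (eventually_ne_atTop 0) |>.exists
  exact ⟨u ^ n, hnW, ⟨u ^ n, subset_closure (Subgroup.npow_mem_zpowers u n)⟩, ht n hn, rfl⟩

theorem eventually_preimage_val_closure_zpowers_mem_residual
    (hpow : ∀ n : ℕ, n ≠ 0 → Tendsto (· ^ n) (residual Γ) (residual Γ))
    (hrec : ∀ᶠ u in residual Γ, MapClusterPt 1 atTop (u ^ · : ℕ → Γ))
    {G : Set Γ} (hG : G ∈ residual Γ) :
    ∀ᶠ u in residual Γ, (Subtype.val ⁻¹' G : Set (closure (Subgroup.zpowers u : Set Γ))) ∈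
      residual (closure (Subgroup.zpowers u : Set Γ)) := by
  obtain ⟨S, hSo, hSd, hSc, hSG⟩ := mem_residual_iff.1 hG
  have hpowS : ∀ᶠ u in residual Γ, ∀ t ∈ S, ∀ n : ℕ, n ≠ 0 → u ^ n ∈ t := by
    rw [eventually_countable_ball hSc]
    intro t ht
    rw [eventually_countable_forall]
    exact fun n ↦ eventually_imp_distrib_left.2 fun hn ↦
      hpow n hn (residual_of_dense_open (hSo t ht) (hSd t ht))
  filter_upwards [hpowS, hrec] with u hpowu hrecu
  refine mem_of_superset ?_ (preimage_mono hSG)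
  rw [preimage_sInter, countable_bInter_mem hSc]
  exact fun t ht ↦ residual_of_dense_open ((hSo t ht).preimage continuous_subtype_val)
    (dense_preimage_val_closure_zpowers hrecu (hpowu t ht))

theorem mem_residual_iff_eventually_closure_zpowers
    [TopologicalSpace.IsCompletelyMetrizableSpace Γ]
    (hpow : ∀ n : ℕ, n ≠ 0 → Tendsto (· ^ n) (residual Γ) (residual Γ))
    (hrec : Dense {u : Γ | MapClusterPt 1 atTop (u ^ · : ℕ → Γ)})
    {G : Set Γ} (hG : BaireMeasurableSet G) :
    G ∈ residual Γ ↔ ∀ᶠ u in residual Γ,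
      (Subtype.val ⁻¹' G : Set (closure (Subgroup.zpowers u : Set Γ))) ∈
        residual (closure (Subgroup.zpowers u : Set Γ)) := by
  have (u : Γ) : BaireSpace (closure (Subgroup.zpowers u : Set Γ)) :=
    have := (isClosed_closure (s := (Subgroup.zpowers u : Set Γ))).isClosedEmbedding_subtypeVal
      |>.IsCompletelyMetrizableSpace
    inferInstance
  exact mem_residual_iff_eventually_preimage_val_mem_residual
    (fun u ↦ subset_closure (Subgroup.mem_zpowers u))
    (fun _ ↦ eventually_preimage_val_closure_zpowers_mem_residual hpow
      (residual_of_dense_Gδ isGδ_setOf_mapClusterPt_one_pow hrec)) hG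

end Recurrence

section Roots

theorem circle_dist_eq_norm_sub (a b : Circle) : dist a b = ‖(a : ℂ) - b‖ :=
  Complex.dist_eq a b

theorem exists_pow_eq_dist_le {n : ℕ} (hn : n ≠ 0) (l z : Circle) :
    ∃ r : Circle, r ^ n = z ∧ dist r l ≤ 2 * dist z (l ^ n) := by
  set θ : ℝ := Complex.arg ((z / l ^ n : Circle) : ℂ) with hθ
  have hn' : (n : ℝ) ≠ 0 := by exact_mod_cast hn
  refine ⟨l * Circle.exp (θ / n), ?_, ?_⟩
  · rw [mul_pow, ← Circle.exp_nsmul, nsmul_eq_mul, mul_div_cancel₀ _ hn', Circle.exp_arg,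
      mul_div_cancel]
  have hchord : dist (l * Circle.exp (θ / n)) l ≤ |θ / n| := by
    have hfactor : (l : ℂ) * Complex.exp ((θ / n : ℝ) * Complex.I) - l =
        l * (Complex.exp (Complex.I * (θ / n : ℝ)) - 1) := by
      rw [mul_comm Complex.I]
      ring
    rw [circle_dist_eq_norm_sub, Circle.coe_mul, Circle.coe_exp, hfactor, norm_mul,
      Circle.norm_coe, one_mul]
    exact Real.norm_exp_I_mul_ofReal_sub_one_le
  have hangle : |θ| ≤ Real.pi / 2 * dist z (l ^ n) := by
    have := Complex.angle_le_mul_norm_sub (Circle.norm_coe z) (Circle.norm_coe (l ^ n))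
    rw [Complex.angle_eq_abs_arg z.coe_ne_zero (l ^ n).coe_ne_zero] at this
    simpa [hθ, circle_dist_eq_norm_sub] using this
  calc dist (l * Circle.exp (θ / n)) l ≤ |θ| / n := by rwa [abs_div, Nat.abs_cast] at hchord
    _ ≤ |θ| := div_le_self (abs_nonneg θ) (by exact_mod_cast Nat.one_le_iff_ne_zero.2 hn)
    _ ≤ Real.pi / 2 * dist z (l ^ n) := hangle
    _ ≤ 2 * dist z (l ^ n) := by
      gcongr
      linarith [Real.pi_le_four]

theorem exists_pos_forall_ne_le_dist {ι X : Type*} [Finite ι] [MetricSpace X] (x : ι → X) :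
    ∃ η > 0, ∀ i j, x i ≠ x j → η ≤ dist (x i) (x j) := by
  have hev : ∀ᶠ η in 𝓝[>] (0 : ℝ), ∀ i j, x i ≠ x j → η ≤ dist (x i) (x j) := by
    simp only [eventually_all]
    exact fun i j hij ↦ nhdsWithin_le_nhds (eventually_le_nhds (dist_pos.2 hij))
  obtain ⟨η, hη, hpos⟩ := (hev.and self_mem_nhdsWithin).exists
  exact ⟨η, hpos, hη⟩

theorem exists_pow_eq_forall_dist_le {ι : Type*} [Finite ι] {n : ℕ} (hn : n ≠ 0) {l : ι → Circle}
    (hl : (range l).InjOn (· ^ n)) :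
    ∃ C > 0, ∀ z : Circle, ∃ r : Circle, r ^ n = z ∧ ∀ i, dist r (l i) ≤ C * dist z (l i ^ n) := by
  obtain ⟨η, hη, hsep⟩ := exists_pos_forall_ne_le_dist fun i ↦ l i ^ n
  refine ⟨2 + 4 / η, by positivity, fun z ↦ ?_⟩
  have hfar {r : Circle} {i : ι} (hi : η / 2 ≤ dist z (l i ^ n)) :
      dist r (l i) ≤ (2 + 4 / η) * dist z (l i ^ n) :=
    calc dist r (l i) ≤ 2 := by
          rw [circle_dist_eq_norm_sub]
          exact (norm_sub_le _ _).trans (by rw [Circle.norm_coe, Circle.norm_coe]; norm_num)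
      _ = 4 / η * (η / 2) := by field_simp; norm_num
      _ ≤ (2 + 4 / η) * dist z (l i ^ n) := by gcongr; linarith [div_pos four_pos hη]
  by_cases! hnear : ∃ i, dist z (l i ^ n) < η / 2
  · obtain ⟨i, hi⟩ := hnear
    obtain ⟨r, hrz, hr⟩ := exists_pow_eq_dist_le hn (l i) z
    refine ⟨r, hrz, fun j ↦ ?_⟩
    by_cases hij : l i ^ n = l j ^ n
    · rw [← hl ⟨i, rfl⟩ ⟨j, rfl⟩ hij]
      exact hr.trans (by gcongr; linarith [div_pos four_pos hη])
    · refine hfar ?_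
      linarith [hsep i j hij, dist_triangle_left (l i ^ n) (l j ^ n) z]
  · obtain ⟨r, hrz, -⟩ := exists_pow_eq_dist_le hn 1 z
    exact ⟨r, hrz, fun i ↦ hfar (hnear i)⟩

theorem injOn_pow_range_exp_ratCast {n : ℕ} (hn : n ≠ 0) :
    (range fun q : ℚ ↦ Circle.exp q).InjOn (· ^ n) := by
  rintro _ ⟨p, rfl⟩ _ ⟨q, rfl⟩ hpq
  simp only [← Circle.exp_nsmul, Circle.exp_eq_exp, nsmul_eq_mul] at hpq ⊢
  obtain ⟨m, hm⟩ := hpq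
  have hn' : (n : ℝ) ≠ 0 := by exact_mod_cast hn
  obtain rfl | hm0 := eq_or_ne m 0
  · exact ⟨0, by simpa [hn'] using hm⟩
  · refine absurd ⟨n * (p - q) / (2 * m), ?_⟩ irrational_pi
    have hm' : (m : ℝ) ≠ 0 := by exact_mod_cast hm0
    push_cast
    field_simp
    linarith

theorem dense_setOf_injOn_pow_range {n : ℕ} (hn : n ≠ 0) (ι : Type*) :
    Dense {l : ι → Circle | (range l).InjOn (· ^ n)} := by
  have hexp : DenseRange fun q : ℚ ↦ Circle.exp q :=
    (Function.Surjective.denseRange fun z ↦ ⟨_, Circle.exp_arg z⟩).comp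
      Rat.denseRange_cast Circle.exp.continuous
  refine (dense_pi univ fun (_ : ι) _ ↦ hexp).mono fun l hl ↦ ?_
  exact (injOn_pow_range_exp_ratCast hn).mono (range_subset_iff.2 fun i ↦ hl i trivial)

end Roots

section Equicontinuity

variable {ι X α : Type*} [TopologicalSpace X] [UniformSpace α] {F : ι → X → α} {x : X}
  {l : Filter ι}

theorem tendsto_apply_of_equicontinuousAt (hF : EquicontinuousAt F x) {y : ι → X} {a : α}
    (hFx : Tendsto (F · x) l (𝓝 a)) (hy : Tendsto y l (𝓝 x)) :
    Tendsto (fun i ↦ F i (y i)) l (𝓝 a) :=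
  hFx.congr_uniformity fun U hU ↦ (hy.eventually (hF U hU)).mono fun i hi ↦ hi i

theorem cauchy_map_apply_of_mem_closure (hF : EquicontinuousAt F x) {s : Set X}
    (hx : x ∈ closure s) (hs : ∀ y ∈ s, Cauchy (map (F · y) l)) : Cauchy (map (F · x) l) := by
  simp only [cauchy_map_iff] at hs ⊢
  obtain ⟨y₀, hy₀⟩ := closure_nonempty_iff.1 ⟨x, hx⟩
  refine ⟨(hs y₀ hy₀).1, fun U hU ↦ ?_⟩
  obtain ⟨V, hV, hVsymm, hVU⟩ := comp_comp_symm_mem_uniformity_sets hU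
  obtain ⟨y, hxy, hy⟩ := mem_closure_iff_nhds.1 hx _ (hF V hV)
  refine ((hs y hy).2.eventually_mem hV).mono fun p hp ↦ ?_
  exact hVU ⟨F p.2 y, ⟨F p.1 y, hxy p.1, hp⟩, hVsymm.symm _ _ (hxy p.2)⟩

end Equicontinuity

namespace UnitarySOT

variable {H : Type*} [NormedAddCommGroup H] [InnerProductSpace ℂ H] [CompleteSpace H]

instance : FunLike (UnitarySOT H) H H where
  coe u := (show unitary (H →L[ℂ] H) from u).val
  coe_injective _ _ h := Subtype.ext (DFunLike.coe_injective h)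

instance : LinearIsometryClass (UnitarySOT H) ℂ H H where
  map_add u := map_add (show unitary (H →L[ℂ] H) from u).val
  map_smulₛₗ u := map_smulₛₗ (show unitary (H →L[ℂ] H) from u).val
  norm_map u := Unitary.norm_map u

theorem mul_apply (u v : UnitarySOT H) (x : H) : (u * v) x = u (v x) := rfl

theorem one_apply (x : H) : (1 : UnitarySOT H) x = x := rfl

theorem inv_apply_self (u : UnitarySOT H) (x : H) : u⁻¹ (u x) = x := by
  rw [← mul_apply, inv_mul_cancel, one_apply]

theorem apply_inv_self (u : UnitarySOT H) (x : H) : u (u⁻¹ x) = x := by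
  rw [← mul_apply, mul_inv_cancel, one_apply]

theorem equicontinuous_coe : Equicontinuous fun (u : UnitarySOT H) (x : H) ↦ u x :=
  (LipschitzWith.uniformEquicontinuous _ 1
    fun u ↦ (SemilinearIsometryClass.isometry u).lipschitz).equicontinuous

theorem isInducing_coe : IsInducing fun (u : UnitarySOT H) (x : H) ↦ u x := ⟨rfl⟩

theorem tendsto_nhds_iff {ι : Type*} {l : Filter ι} {v : ι → UnitarySOT H} {u : UnitarySOT H} :
    Tendsto v l (𝓝 u) ↔ ∀ x, Tendsto (v · x) l (𝓝 (u x)) := by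
  rw [isInducing_coe.tendsto_nhds_iff, tendsto_pi_nhds]
  rfl

theorem tendsto_nhds_of_dense {ι : Type*} {l : Filter ι} {v : ι → UnitarySOT H} {u : UnitarySOT H}
    {s : Set H} (hs : Dense s) (h : ∀ y ∈ s, Tendsto (v · y) l (𝓝 (u y))) : Tendsto v l (𝓝 u) :=
  tendsto_nhds_iff.2 fun x ↦ ((equicontinuous_coe x).comp v).tendsto_of_mem_closure
    ((map_continuous u).continuousWithinAt (s := s)) h (hs x)

instance : ContinuousEval (UnitarySOT H) H H where
  continuous_eval := continuous_iff_continuousAt.2 fun p ↦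
    tendsto_apply_of_equicontinuousAt ((equicontinuous_coe p.2).comp Prod.fst)
      ((tendsto_nhds_iff.1 (continuous_fst.tendsto p)) p.2) (continuous_snd.tendsto p)

instance : IsTopologicalGroup (UnitarySOT H) where
  continuous_mul := isInducing_coe.continuous_iff.2 <| continuous_pi fun x ↦
    continuous_fst.eval (continuous_snd.eval continuous_const)
  continuous_inv := continuous_iff_continuousAt.2 fun u ↦ tendsto_nhds_iff.2 fun x ↦ by
    have hux : Tendsto (fun v : UnitarySOT H ↦ v (u⁻¹ x)) (𝓝 u) (𝓝 x) := by
      simpa only [apply_inv_self] using (continuous_eval_const (u⁻¹ x)).tendsto u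
    rw [tendsto_iff_dist_tendsto_zero] at hux ⊢
    refine hux.congr fun v ↦ ?_
    rw [← (SemilinearIsometryClass.isometry v⁻¹).dist_eq, inv_apply_self, dist_comm]

theorem exists_tendsto_of_forall_cauchy {ι : Type*} {l : Filter ι} [NeBot l]
    {v : ι → UnitarySOT H} {s : Set H} (hs : Dense s) (h : ∀ y ∈ s, Cauchy (map (v · y) l))
    (hinv : ∀ y ∈ s, Cauchy (map (fun i ↦ (v i)⁻¹ y) l)) : ∃ u, Tendsto v l (𝓝 u) := by
  have hlim (w : ι → UnitarySOT H) (hw : ∀ y ∈ s, Cauchy (map (w · y) l)) (x : H) :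
      ∃ a, Tendsto (w · x) l (𝓝 a) :=
    cauchy_map_iff_exists_tendsto.1 <|
      cauchy_map_apply_of_mem_closure ((equicontinuous_coe x).comp w) (hs x) hw
  choose A hA using hlim v h
  choose B hB using hlim (fun i ↦ (v i)⁻¹) hinv
  have hsurj (x : H) : A (B x) = x := by
    have := tendsto_apply_of_equicontinuousAt ((equicontinuous_coe (B x)).comp v)
      (hA (B x)) (hB x)
    simp only [Function.comp_def, apply_inv_self] at this
    exact tendsto_nhds_unique this tendsto_const_nhds
  let T : H →ₗᵢ[ℂ] H :=
    { linearMapOfTendsto A (fun i ↦ ((v i : UnitarySOT H) : H →ₗ[ℂ] H)) (tendsto_pi_nhds.2 hA) with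
      norm_map' x := tendsto_nhds_unique (hA x).norm (by simp) }
  let e : H ≃ₗᵢ[ℂ] H := LinearIsometryEquiv.ofSurjective T fun x ↦ ⟨B x, hsurj x⟩
  exact ⟨Unitary.linearIsometryEquiv.symm e, tendsto_nhds_iff.2 hA⟩

theorem isClosedEmbedding_apply_prodMk_inv_apply {ι : Type*} {d : ι → H} (hd : DenseRange d) :
    IsClosedEmbedding fun u : UnitarySOT H ↦ (fun i ↦ u (d i), fun i ↦ u⁻¹ (d i)) := by
  set Φ : UnitarySOT H → (ι → H) × (ι → H) := fun u ↦ (fun i ↦ u (d i), fun i ↦ u⁻¹ (d i))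
  have hΦ : Continuous Φ := by fun_prop
  have htendsto (p) (i : ι) : Tendsto (fun u : UnitarySOT H ↦ u (d i)) (comap Φ (𝓝 p))
      (𝓝 (p.1 i)) := ((continuous_apply i).comp continuous_fst).tendsto p |>.comp tendsto_comap
  have htendsto_inv (p) (i : ι) : Tendsto (fun u : UnitarySOT H ↦ u⁻¹ (d i)) (comap Φ (𝓝 p))
      (𝓝 (p.2 i)) := ((continuous_apply i).comp continuous_snd).tendsto p |>.comp tendsto_comap
  refine ⟨⟨isInducing_iff_nhds.2 fun u ↦ le_antisymm (hΦ.tendsto u).le_comap ?_, fun u v huv ↦ ?_⟩,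
    isClosed_of_closure_subset fun p hp ↦ ?_⟩
  · have : Tendsto id (comap Φ (𝓝 (Φ u))) (𝓝 u) :=
      tendsto_nhds_of_dense hd (forall_mem_range.2 (htendsto (Φ u)))
    exact this
  · exact DFunLike.coe_injective <| (map_continuous u).ext_on hd (map_continuous v) <|
      forall_mem_range.2 (congrFun (congrArg Prod.fst huv))
  · have : NeBot (comap Φ (𝓝 p)) := comap_neBot_iff_frequently.2 (mem_closure_iff_frequently.1 hp)
    obtain ⟨u, hu⟩ := exists_tendsto_of_forall_cauchy (v := id) (l := comap Φ (𝓝 p)) hd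
      (forall_mem_range.2 fun i ↦ (htendsto p i).cauchy_map)
      (forall_mem_range.2 fun i ↦ (htendsto_inv p i).cauchy_map)
    exact ⟨u, tendsto_nhds_unique ((hΦ.tendsto u).comp hu) tendsto_comap⟩

instance [TopologicalSpace.SeparableSpace H] : PolishSpace (UnitarySOT H) :=
  (isClosedEmbedding_apply_prodMk_inv_apply (TopologicalSpace.denseRange_denseSeq H)).polishSpace

end UnitarySOT

section SpectralTheorem

open Module.End

variable {𝕜 E : Type*} [RCLike 𝕜] [NormedAddCommGroup E] [InnerProductSpace 𝕜 E]

theorem norm_eq_one_of_hasEigenvector (T : E →ₗᵢ[𝕜] E) {μ : 𝕜} {x : E}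
    (hx : HasEigenvector T.toLinearMap μ x) : ‖μ‖ = 1 := by
  have hnorm : ‖μ‖ * ‖x‖ = ‖x‖ := by
    rw [← norm_smul, ← hx.apply_eq_smul, LinearIsometry.coe_toLinearMap, T.norm_map]
  exact (mul_eq_right₀ (norm_ne_zero_iff.2 hx.2)).1 hnorm

theorem isOrtho_eigenspace (T : E →ₗᵢ[𝕜] E) {μ ν : 𝕜} (hμν : μ ≠ ν) :
    eigenspace T.toLinearMap μ ⟂ eigenspace T.toLinearMap ν := by
  rw [Submodule.isOrtho_iff_inner_eq]
  intro x hx y hy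
  obtain rfl | hx0 := eq_or_ne x 0
  · exact inner_zero_left y
  have hμ : μ * conj μ = 1 := by
    rw [RCLike.mul_conj, norm_eq_one_of_hasEigenvector T ⟨hx, hx0⟩]
    simp
  have hinner : conj μ * (ν * ⟪x, y⟫_𝕜) = ⟪x, y⟫_𝕜 := by
    rw [← inner_smul_right, ← inner_smul_left, ← mem_eigenspace_iff.1 hx,
      ← mem_eigenspace_iff.1 hy]
    exact T.inner_map_map x y
  have : (ν - μ) * ⟪x, y⟫_𝕜 = 0 := by linear_combination μ * hinner - ν * ⟪x, y⟫_𝕜 * hμ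
  exact (mul_eq_zero.1 this).resolve_left (sub_ne_zero.2 hμν.symm)

variable [FiniteDimensional 𝕜 E]

theorem orthogonal_mem_invtSubmodule (T : E →ₗᵢ[𝕜] E) {p : Submodule 𝕜 E}
    (hp : p ∈ invtSubmodule T.toLinearMap) : pᗮ ∈ invtSubmodule T.toLinearMap := by
  have hmap : p.map T.toLinearMap = p :=
    Submodule.eq_of_le_of_finrank_le (Submodule.map_le_iff_le_comap.2 hp)
      (Submodule.equivMapOfInjective T.toLinearMap T.injective p).finrank_eq.le
  intro x hx
  rw [Submodule.mem_comap, Submodule.mem_orthogonal, ← hmap]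
  rintro _ ⟨y, hy, rfl⟩
  exact (T.inner_map_map y x).trans (hx y hy)

theorem isSemisimple_of_linearIsometry (T : E →ₗᵢ[𝕜] E) : IsSemisimple T.toLinearMap :=
  isSemisimple_iff.2 fun p hp ↦
    ⟨pᗮ, orthogonal_mem_invtSubmodule T hp, Submodule.isCompl_orthogonal p⟩

theorem iSup_eigenspace_eq_top [IsAlgClosed 𝕜] (T : E →ₗᵢ[𝕜] E) :
    ⨆ μ, eigenspace T.toLinearMap μ = ⊤ := by
  rw [← iSup_maxGenEigenspace_eq_top T.toLinearMap]
  simp only [(isSemisimple_of_linearIsometry T).isFinitelySemisimple.maxGenEigenspace_eq_eigenspace]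

theorem exists_orthonormalBasis_apply_eq_smul {E : Type*} [NormedAddCommGroup E]
    [InnerProductSpace ℂ E] [FiniteDimensional ℂ E] (T : E →ₗᵢ[ℂ] E) :
    ∃ (b : OrthonormalBasis (Fin (Module.finrank ℂ E)) ℂ E)
      (μ : Fin (Module.finrank ℂ E) → Circle), ∀ i, T (b i) = μ i • b i := by
  classical
  let V (μ : Eigenvalues T.toLinearMap) := eigenspace T.toLinearMap (μ : ℂ)
  have hortho : OrthogonalFamily ℂ (fun μ ↦ V μ) fun μ ↦ (V μ).subtypeₗᵢ :=
    OrthogonalFamily.of_pairwise fun μ ν hμν ↦ isOrtho_eigenspace T (Subtype.coe_ne_coe.2 hμν)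
  have hinternal : DirectSum.IsInternal V := by
    rw [hortho.isInternal_iff, Submodule.orthogonal_eq_bot_iff]
    exact iSup_ne_bot_subtype (eigenspace T.toLinearMap) |>.trans (iSup_eigenspace_eq_top T)
  let b := hinternal.subordinateOrthonormalBasis rfl hortho
  let μ i : Eigenvalues T.toLinearMap := hinternal.subordinateOrthonormalBasisIndex rfl i hortho
  have hb (i) : HasEigenvector T.toLinearMap (μ i : ℂ) (b i) :=
    ⟨hinternal.subordinateOrthonormalBasis_subordinate rfl i hortho, b.orthonormal.ne_zero i⟩
  exact ⟨b, fun i ↦ ⟨μ i, mem_sphere_zero_iff_norm.2 (norm_eq_one_of_hasEigenvector T (hb i))⟩,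
    fun i ↦ (hb i).apply_eq_smul⟩

theorem exists_finiteDimensional_extension {V : Type*} [NormedAddCommGroup V]
    [InnerProductSpace 𝕜 V] (w : V →ₗᵢ[𝕜] V) (K : Submodule 𝕜 V) [FiniteDimensional 𝕜 K] :
    ∃ E : Submodule 𝕜 V, FiniteDimensional 𝕜 E ∧ K ≤ E ∧
      ∃ T : E →ₗᵢ[𝕜] E, ∀ x : E, (x : V) ∈ K → (T x : V) = w x := by
  let E := K ⊔ K.map w.toLinearMap
  let S := K.comap E.subtype
  let T₀ : S →ₗᵢ[𝕜] E :=
    { (w.toLinearMap ∘ₗ E.subtype ∘ₗ S.subtype).codRestrict E fun x ↦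
        le_sup_right (a := K) (Submodule.mem_map_of_mem x.2) with
      norm_map' x := w.norm_map x }
  exact ⟨E, inferInstance, le_sup_left, T₀.extend,
    fun x hx ↦ congrArg Subtype.val (T₀.extend_apply ⟨x, hx⟩)⟩

end SpectralTheorem

section Diagonal

variable {ι H : Type*} [Fintype ι] [NormedAddCommGroup H] [InnerProductSpace ℂ H] {f : ι → H}

theorem norm_sum_smul_sq_eq (hf : Orthonormal ℂ f) (a : ι → ℂ) :
    ‖∑ i, a i • f i‖ ^ 2 = ∑ i, ‖a i‖ ^ 2 :=
  hf.orthogonalFamily.norm_sum a Finset.univ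

theorem map_eq_sum_inner_smul {F M : Type*} [AddCommMonoid M] [Module ℂ M] [FunLike F H M]
    [LinearMapClass F ℂ H M] (T : F) (hf : Orthonormal ℂ f) {x : H}
    (hx : x ∈ Submodule.span ℂ (range f)) : T x = ∑ i, ⟪f i, x⟫_ℂ • T (f i) := by
  obtain ⟨a, rfl⟩ := (Submodule.mem_span_range_iff_exists_fun ℂ).1 hx
  simp [map_sum, hf.inner_right_fintype]

/-- The operator that multiplies each of the orthonormal vectors `f i` by the scalar `μ i` and
fixes their orthogonal complement. -/
noncomputable def diagonalOperator (f : ι → H) (μ : ι → Circle) : H →L[ℂ] H :=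
  1 + ∑ i, ((μ i : ℂ) - 1) • InnerProductSpace.rankOne ℂ (f i) (f i)

theorem diagonalOperator_apply (f : ι → H) (μ : ι → Circle) (x : H) :
    diagonalOperator f μ x = x + ∑ i, (((μ i : ℂ) - 1) * ⟪f i, x⟫_ℂ) • f i := by
  simp [diagonalOperator, smul_smul]

theorem diagonalOperator_one (f : ι → H) : diagonalOperator f 1 = 1 := by
  simp [diagonalOperator]

theorem inner_diagonalOperator_apply (hf : Orthonormal ℂ f) (μ : ι → Circle) (i : ι) (x : H) :
    ⟪f i, diagonalOperator f μ x⟫_ℂ = μ i * ⟪f i, x⟫_ℂ := by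
  rw [diagonalOperator_apply, inner_add_right, hf.inner_right_fintype]
  ring

theorem diagonalOperator_mul (hf : Orthonormal ℂ f) (μ ν : ι → Circle) :
    diagonalOperator f (μ * ν) = diagonalOperator f μ * diagonalOperator f ν := by
  ext x
  rw [mul_apply_eq_comp, diagonalOperator_apply f μ]
  simp only [inner_diagonalOperator_apply hf]
  simp only [diagonalOperator_apply, add_assoc, ← Finset.sum_add_distrib, ← add_smul,
    Pi.mul_apply, Circle.coe_mul]
  congr! 3
  ring

theorem diagonalOperator_apply_sum (hf : Orthonormal ℂ f) (μ : ι → Circle) (a : ι → ℂ) :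
    diagonalOperator f μ (∑ i, a i • f i) = ∑ i, (μ i * a i) • f i := by
  simp only [diagonalOperator_apply, hf.inner_right_fintype, ← Finset.sum_add_distrib, ← add_smul]
  congr! 2
  ring

theorem diagonalOperator_apply_self (hf : Orthonormal ℂ f) (μ : ι → Circle) (i : ι) :
    diagonalOperator f μ (f i) = μ i • f i := by
  classical
  simpa [Pi.single_apply, Circle.smul_def] using diagonalOperator_apply_sum hf μ (Pi.single i 1)

variable [CompleteSpace H]

theorem star_diagonalOperator (f : ι → H) (μ : ι → Circle) :
    star (diagonalOperator f μ) = diagonalOperator f μ⁻¹ := by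
  simp [diagonalOperator, ContinuousLinearMap.star_eq_adjoint, -Circle.coe_inv,
    Circle.coe_inv_eq_conj]

namespace UnitarySOT

/-- The homomorphism from the torus `ι → Circle` to the unitary group given by the operators that
are diagonal with respect to the orthonormal family `f`. -/
noncomputable def diagonal (hf : Orthonormal ℂ f) : (ι → Circle) →* UnitarySOT H where
  toFun μ := ⟨diagonalOperator f μ, Unitary.mem_iff.2 (by
    simp [star_diagonalOperator, ← diagonalOperator_mul hf, diagonalOperator_one])⟩
  map_one' := Subtype.ext (diagonalOperator_one f)
  map_mul' μ ν := Subtype.ext (diagonalOperator_mul hf μ ν)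

theorem diagonal_apply (hf : Orthonormal ℂ f) (μ : ι → Circle) (x : H) :
    diagonal hf μ x = diagonalOperator f μ x := rfl

theorem diagonal_apply_self (hf : Orthonormal ℂ f) (μ : ι → Circle) (i : ι) :
    diagonal hf μ (f i) = μ i • f i :=
  diagonalOperator_apply_self hf μ i

theorem continuous_diagonal (hf : Orthonormal ℂ f) : Continuous (diagonal hf) := by
  refine isInducing_coe.continuous_iff.2 (continuous_pi fun x ↦ ?_)
  simp only [Function.comp_def, diagonal_apply, diagonalOperator_apply]
  fun_prop

theorem mapClusterPt_one_diagonal_pow (hf : Orthonormal ℂ f) (μ : ι → Circle) :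
    MapClusterPt 1 atTop (diagonal hf μ ^ · : ℕ → UnitarySOT H) := by
  simpa [Function.comp_def] using
    (mapClusterPt_one_atTop_pow μ).continuousAt_comp (continuous_diagonal hf).continuousAt

theorem norm_diagonal_sub_smul_sq_eq (hf : Orthonormal ℂ f) (μ : ι → Circle) (c : Circle)
    (a : ι → ℂ) : ‖diagonal hf μ (∑ i, a i • f i) - c • ∑ i, a i • f i‖ ^ 2 =
      ∑ i, dist (μ i) c ^ 2 * ‖a i‖ ^ 2 := by
  simp only [diagonal_apply, diagonalOperator_apply_sum hf, Circle.smul_def, Finset.smul_sum,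
    smul_smul, ← Finset.sum_sub_distrib, ← sub_smul, ← sub_mul, norm_sum_smul_sq_eq hf, norm_mul,
    mul_pow, circle_dist_eq_norm_sub]

theorem norm_diagonal_sub_smul_le (hf : Orthonormal ℂ f) {μ ν : ι → Circle} {c d : Circle} {C : ℝ}
    (hC : 0 ≤ C) (h : ∀ i, dist (μ i) c ≤ C * dist (ν i) d) {x : H}
    (hx : x ∈ Submodule.span ℂ (range f)) :
    ‖diagonal hf μ x - c • x‖ ≤ C * ‖diagonal hf ν x - d • x‖ := by
  obtain ⟨a, rfl⟩ := (Submodule.mem_span_range_iff_exists_fun ℂ).1 hx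
  rw [← sq_le_sq₀ (norm_nonneg _) (by positivity), mul_pow, norm_diagonal_sub_smul_sq_eq,
    norm_diagonal_sub_smul_sq_eq, Finset.mul_sum]
  refine Finset.sum_le_sum fun i _ ↦ ?_
  rw [← mul_assoc, ← mul_pow C]
  gcongr
  exact h i

end UnitarySOT

end Diagonal

section PowerMap

namespace UnitarySOT

variable {H : Type*} [NormedAddCommGroup H] [InnerProductSpace ℂ H] [CompleteSpace H]

theorem exists_diagonal_eqOn (w : UnitarySOT H) (K : Submodule ℂ H) [FiniteDimensional ℂ K] :
    ∃ (m : ℕ) (f : Fin m → H) (hf : Orthonormal ℂ f) (μ : Fin m → Circle),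
      K ≤ Submodule.span ℂ (range f) ∧ EqOn (diagonal hf μ) w K := by
  obtain ⟨E, _, hKE, T, hT⟩ := exists_finiteDimensional_extension
    { (w : H →ₗ[ℂ] H) with norm_map' := SemilinearIsometryClass.norm_map w } K
  obtain ⟨b, μ, hb⟩ := exists_orthonormalBasis_apply_eq_smul T
  have hf : Orthonormal ℂ fun i ↦ (b i : H) := b.orthonormal.comp_linearIsometry E.subtypeₗᵢ
  have hsum (x : E) : ∑ i, b.repr x i • (b i : H) = x := by
    simpa using congrArg Subtype.val (b.sum_repr x)
  have hdiag (x : E) : diagonal hf μ x = T x := by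
    rw [← hsum x]
    conv_rhs => rw [← b.sum_repr x]
    simp [map_sum, hb, diagonal_apply_self hf, Circle.smul_def]
  exact ⟨_, _, hf, μ,
    fun x hx ↦ (Submodule.mem_span_range_iff_exists_fun ℂ).2 ⟨_, hsum ⟨x, hKE hx⟩⟩,
    fun x hx ↦ (hdiag ⟨x, hKE hx⟩).trans (hT _ hx)⟩

theorem exists_diagonal_cylinder_subset {O : Set (UnitarySOT H)} (hO : IsOpen O)
    (hne : O.Nonempty) (K : Submodule ℂ H) [FiniteDimensional ℂ K] :
    ∃ (m : ℕ) (f : Fin m → H) (hf : Orthonormal ℂ f) (μ : Fin m → Circle) (W : Set (Fin m → H)),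
      K ≤ Submodule.span ℂ (range f) ∧ IsOpen W ∧ diagonal hf μ ∘ f ∈ W ∧
      ∀ v : UnitarySOT H, v ∘ f ∈ W → v ∈ O := by
  obtain ⟨w, hw⟩ := hne
  obtain ⟨P, hP, rfl⟩ := isInducing_coe.isOpen_iff.1 hO
  obtain ⟨Y, S, hwS, hSP⟩ := isOpen_pi_iff.1 hP _ hw
  obtain ⟨m, f, hf, μ, hle, hμ⟩ := exists_diagonal_eqOn w (K ⊔ Submodule.span ℂ Y)
  have hY (y) (hy : y ∈ Y) : y ∈ K ⊔ Submodule.span ℂ Y :=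
    le_sup_right (a := K) (Submodule.subset_span hy)
  let W : Set (Fin m → H) := ⋂ y ∈ Y, (fun a ↦ ∑ i, ⟪f i, y⟫_ℂ • a i) ⁻¹' S y
  have hW (v : UnitarySOT H) : v ∘ f ∈ W ↔ ∀ y ∈ Y, v y ∈ S y := by
    simp only [W, mem_iInter₂, mem_preimage, Function.comp_apply]
    exact forall₂_congr fun y hy ↦ by rw [map_eq_sum_inner_smul v hf (hle (hY y hy))]
  refine ⟨m, f, hf, μ, W, le_sup_left.trans hle, ?_, ?_, fun v hv ↦ hSP ((hW v).1 hv)⟩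
  · exact isOpen_biInter_finset fun y hy ↦ (hwS y hy).1.preimage (by fun_prop)
  · exact (hW _).2 fun y hy ↦ hμ (hY y hy) ▸ (hwS y hy).2

theorem dense_setOf_mapClusterPt_one_pow :
    Dense {u : UnitarySOT H | MapClusterPt 1 atTop (u ^ · : ℕ → UnitarySOT H)} := by
  refine dense_iff_inter_open.2 fun O hO hne ↦ ?_
  obtain ⟨m, f, hf, μ, W, -, -, hμW, hWO⟩ := exists_diagonal_cylinder_subset hO hne ⊥
  exact ⟨diagonal hf μ, hWO _ hμW, mapClusterPt_one_diagonal_pow hf μ⟩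

theorem exists_pow_eq_forall_norm_diagonal_sub_smul_le {ι : Type*} [Finite ι] {n : ℕ} (hn : n ≠ 0)
    (f : ι → H) {l : ι → Circle} (hl : (range l).InjOn (· ^ n)) :
    ∃ C > 0, ∀ {m : ℕ} {g : Fin m → H} (hg : Orthonormal ℂ g) (ν : Fin m → Circle),
      Submodule.span ℂ (range f) ≤ Submodule.span ℂ (range g) →
      ∃ ρ, ρ ^ n = ν ∧ ∀ i,
        ‖diagonal hg ρ (f i) - l i • f i‖ ≤ C * ‖diagonal hg ν (f i) - l i ^ n • f i‖ := by
  obtain ⟨C, hC, hroot⟩ := exists_pow_eq_forall_dist_le hn hl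
  refine ⟨C, hC, fun hg ν hfg ↦ ?_⟩
  choose ρ hρ hρl using fun j ↦ hroot (ν j)
  exact ⟨ρ, funext hρ, fun i ↦ norm_diagonal_sub_smul_le hg hC.le (hρl · i)
    (hfg (Submodule.subset_span (mem_range_self i)))⟩

theorem dense_preimage_pow {n : ℕ} (hn : n ≠ 0) {t : Set (UnitarySOT H)} (hto : IsOpen t)
    (htd : Dense t) : Dense ((· ^ n) ⁻¹' t) := by
  refine dense_iff_inter_open.2 fun O hO hne ↦ ?_
  obtain ⟨m, f, hf, μ, W, -, hW, hμW, hWO⟩ := exists_diagonal_cylinder_subset hO hne ⊥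
  obtain ⟨l, hlW, hl⟩ := (dense_setOf_injOn_pow_range hn (Fin m)).inter_open_nonempty
    ((fun μ ↦ diagonal hf μ ∘ f) ⁻¹' W)
    (hW.preimage (continuous_pi fun i ↦ (continuous_diagonal hf).eval_const (f i))) ⟨μ, hμW⟩
  obtain ⟨ε, hε, hεW⟩ := Metric.isOpen_iff.1 hW _ hlW
  obtain ⟨C, hC, hroot⟩ := exists_pow_eq_forall_norm_diagonal_sub_smul_le hn f hl
  let V : Set (UnitarySOT H) := ⋂ i, {v | ‖v (f i) - l i ^ n • f i‖ < ε / C}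
  have hV : IsOpen V :=
    isOpen_iInter_of_finite fun i ↦ isOpen_lt (by fun_prop) continuous_const
  have hVne : V.Nonempty := ⟨diagonal hf (l ^ n), mem_iInter.2 fun i ↦ by
    simpa [-map_pow, diagonal_apply_self hf] using div_pos hε hC⟩
  have := FiniteDimensional.span_of_finite ℂ (finite_range f)
  obtain ⟨k, g, hg, ν, W', hfg, -, hνW', hW'⟩ := exists_diagonal_cylinder_subset
    (hV.inter hto) (htd.inter_open_nonempty V hV hVne) (Submodule.span ℂ (range f))
  obtain ⟨hνV, hνt⟩ := hW' _ hνW'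
  obtain ⟨ρ, rfl, hρ⟩ := hroot hg ν hfg
  refine ⟨diagonal hg ρ, hWO _ (hεW ((dist_pi_lt_iff hε).2 fun i ↦ ?_)), by simpa using hνt⟩
  calc dist (diagonal hg ρ (f i)) (diagonal hf l (f i))
      = ‖diagonal hg ρ (f i) - l i • f i‖ := by rw [dist_eq_norm, diagonal_apply_self]
    _ ≤ C * ‖diagonal hg (ρ ^ n) (f i) - l i ^ n • f i‖ := hρ i
    _ < ε := (lt_div_iff₀' hC).1 (mem_iInter.1 hνV i)

theorem tendsto_pow_residual {n : ℕ} (hn : n ≠ 0) :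
    Tendsto (· ^ n) (residual (UnitarySOT H)) (residual (UnitarySOT H)) :=
  tendsto_residual_of_dense_preimage (continuous_pow n) fun _ ↦ dense_preimage_pow hn

end UnitarySOT

end PowerMap

theorem statement13_general (H : Type*) [NormedAddCommGroup H] [InnerProductSpace ℂ H]
    [CompleteSpace H] [TopologicalSpace.SeparableSpace H]
    (G : Set (UnitarySOT H)) (hG : BaireMeasurableSet G) :
    G ∈ residual (UnitarySOT H) ↔
      {u : UnitarySOT H |
          (Subtype.val ⁻¹' G : Set (closure (Subgroup.zpowers u : Set (UnitarySOT H)))) ∈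
            residual (closure (Subgroup.zpowers u : Set (UnitarySOT H)))} ∈
        residual (UnitarySOT H) :=
  mem_residual_iff_eventually_closure_zpowers (fun _ ↦ UnitarySOT.tendsto_pow_residual)
    UnitarySOT.dense_setOf_mapClusterPt_one_pow hG

/-- Let `H` be a separable infinite-dimensional complex Hilbert space and `U(H)` its unitary
group with the strong operator topology, and let `G ⊆ U(H)` have the Baire property. Then `G`
is comeager in `U(H)` iff for comeagerly many `u ∈ U(H)` the set `G ∩ cl(⟨u⟩)` is comeager
in `cl(⟨u⟩)` (the closure of the cyclic group generated by `u`, with the subspace topology). -/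
theorem statement13 (H : Type*) [NormedAddCommGroup H] [InnerProductSpace ℂ H]
    [CompleteSpace H] [TopologicalSpace.SeparableSpace H]
    (hinf : ¬ FiniteDimensional ℂ H)
    (G : Set (UnitarySOT H)) (hG : BaireMeasurableSet G) :
    G ∈ residual (UnitarySOT H) ↔
      {u : UnitarySOT H |
          (Subtype.val ⁻¹' G :
              Set (closure ((Subgroup.zpowers u : Subgroup (UnitarySOT H)) : Set (UnitarySOT H)))) ∈
            residual (closure ((Subgroup.zpowers u : Subgroup (UnitarySOT H)) : Set (UnitarySOT H)))} ∈
        residual (UnitarySOT H) := by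
  exact statement13_general H G hG
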